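/- For every t0 ∈ span(𝒥), set G_{t0} := {J ∈ 𝒥 : t0 − d < I(J)⁺ ≤ t0} and, for J ∈ G_{t0}, τ_J := ((t0 − I(J)⁺)/d)·len(J) + I(J)⁻. Then: (i) for every J ∈ G_{t0}, τ_J ∈ I(J) ∩ [t0 − d, t0) (in particular J ∈ 𝒥(τ_J), so r̃(𝒥(τ_J))(J) is defined); and (ii) ∑_{J ∈ 𝒥(t0)} r̃(𝒥(t0))(J) + ∑_{J ∈ G_{t0}} r̃(𝒥(τ_J))(J) ≥ ∑_{J ∈ 𝒥(t0) ∪ ℋ(t0)} r̃(𝒥(t0) ∪ ℋ(t0))(J). -/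

import Mathlib

open scoped Classical
open Finset MeasureTheory

namespace BSHM

noncomputable section

/-- The set of candidate parents of machine type `i`: types `j ∈ M` with `j > i`
and a strictly smaller normalized cost rate per capacity unit. -/
def pset (m : ℕ) (g r : ℕ → ℝ) (i : ℕ) : Set ℕ :=
  {j | j ≤ m ∧ i < j ∧ r j / g j < r i / g i}

/-- The parent `p i` of machine type `i` (equal to `0` when the parent is undefined,
since any actual parent has index `≥ 2`). -/
def p (m : ℕ) (g r : ℕ → ℝ) (i : ℕ) : ℕ := sInf (pset m g r i)

/-- `pdef i` asserts that the parent of `i` is defined. -/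
def pdef (m : ℕ) (g r : ℕ → ℝ) (i : ℕ) : Prop := (pset m g r i).Nonempty

/-- One step of the parent relation: `b` is the (defined) parent of `a`. -/
def pstep (m : ℕ) (g r : ℕ → ℝ) (a b : ℕ) : Prop :=
  pdef m g r a ∧ b = p m g r a

/-- `P i`: the set consisting of `i` together with all of its iterated parents. -/
def P (m : ℕ) (g r : ℕ → ℝ) (i : ℕ) : Set ℕ :=
  {z | Relation.ReflTransGen (pstep m g r) i z}

/-- `A i`: the set of nodes in the tree rooted at `i`,
i.e. all `z ∈ M` having `i` as an ancestor (or equal to `i`). -/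
def A (m : ℕ) (g r : ℕ → ℝ) (i : ℕ) : Set ℕ :=
  {z | 1 ≤ z ∧ z ≤ m ∧ i ∈ P m g r z}

/-- `v i`: the lowest-indexed node in the tree rooted at `i`. -/
def v (m : ℕ) (g r : ℕ → ℝ) (i : ℕ) : ℕ := sInf (A m g r i)

/-- `y i`: the younger siblings of `i` (same parent status, smaller index). -/
def y (m : ℕ) (g r : ℕ → ℝ) (i : ℕ) : Set ℕ :=
  {z | 1 ≤ z ∧ z ≤ m ∧ z < i ∧ p m g r z = p m g r i}

/-- `esib i`: the elder siblings of `i`. -/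
def esib (m : ℕ) (g r : ℕ → ℝ) (i : ℕ) : Set ℕ :=
  {z | 1 ≤ z ∧ z ≤ m ∧ i < z ∧ p m g r z = p m g r i}

/-- `T k := {k} ∪ ⋃_{z ∈ P(k)} y(z)`. -/
def T (m : ℕ) (g r : ℕ → ℝ) (k : ℕ) : Set ℕ :=
  {k} ∪ ⋃ z ∈ P m g r k, y m g r z

/-- `T k` as a `Finset` (all relevant nodes lie in `{k} ∪ [1, m]`). -/
def TIcc (m : ℕ) (g r : ℕ → ℝ) (k : ℕ) : Finset ℕ :=
  (insert k (Finset.Icc 1 m)).filter (fun z => z ∈ T m g r k)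

/-! ### Jobs and one-shot scheduling -/

variable {ι : Type*}

/-- The exact machine type of a job `J`: the least `z ∈ M` with `s J ≤ g z`. -/
def mty (m : ℕ) (g : ℕ → ℝ) (s : ι → ℝ) (J : ι) : ℕ :=
  sInf {z | 1 ≤ z ∧ z ≤ m ∧ s J ≤ g z}

/-- Total size of a finite set of jobs. -/
def Ssum (s : ι → ℝ) (W : Finset ι) : ℝ := ∑ J ∈ W, s J

/-- `k0f X`: the highest-indexed exact machine type among the jobs of `X`. -/
def k0f (m : ℕ) (g : ℕ → ℝ) (s : ι → ℝ) (X : Finset ι) : ℕ :=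
  X.sup (fun J => mty m g s J)

/-- `H z X`: the jobs of `X` whose exact machine type lies in the tree rooted at `z`. -/
def H (m : ℕ) (g r : ℕ → ℝ) (s : ι → ℝ) (z : ℕ) (X : Finset ι) : Finset ι :=
  X.filter (fun J => mty m g s J ∈ A m g r z)

/-- `SH X z := S(H_z(X))`. -/
def SH (m : ℕ) (g r : ℕ → ℝ) (s : ι → ℝ) (X : Finset ι) (z : ℕ) : ℝ :=
  Ssum s (H m g r s z X)

/-- Feasibility of a machine configuration `w : M → ℕ` for the job set `X`. -/
def Feasible (m : ℕ) (g : ℕ → ℝ) (s : ι → ℝ) (X : Finset ι) (w : ℕ → ℕ) : Prop :=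
  ∀ i, 1 ≤ i → i ≤ m →
    Ssum s (X.filter (fun J => i ≤ mty m g s J)) ≤ ∑ z ∈ Finset.Icc i m, (w z : ℝ) * g z

/-- The cost of a machine configuration. -/
def cost (m : ℕ) (r : ℕ → ℝ) (w : ℕ → ℕ) : ℝ :=
  ∑ z ∈ Finset.Icc 1 m, (w z : ℝ) * r z

/-- The optimal one-shot scheduling cost for a job set `X`. -/
def OPT1 (m : ℕ) (g r : ℕ → ℝ) (s : ι → ℝ) (X : Finset ι) : ℝ :=
  sInf {c : ℝ | ∃ w : ℕ → ℕ, Feasible m g s X w ∧ c = cost m r w}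

/-- The fractional machine configuration `cn_{z*}` for the job set `X`, with
highest-indexed machine type `zs`.  A node `i ∈ T(zs) \ {zs}` is the boundary
type `i*` exactly when `∑_{z ∈ T(zs), z > i} S(H_z) ≤ cn(zs)·g(zs) <
∑_{z ∈ T(zs), z ≥ i} S(H_z)`; nodes above the boundary get `0`,
nodes below it get `S(H_i)/g_i`. -/
def cn (m : ℕ) (g r : ℕ → ℝ) (s : ι → ℝ) (X : Finset ι) (zs i : ℕ) : ℝ :=
  let B : ℝ := (⌈SH m g r s X zs / g zs⌉₊ : ℝ) * g zs
  let Sge : ℝ := ∑ z ∈ (TIcc m g r zs).filter (fun z => i ≤ z), SH m g r s X z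
  let Sgt : ℝ := ∑ z ∈ (TIcc m g r zs).filter (fun z => i < z), SH m g r s X z
  if i = zs then (⌈SH m g r s X zs / g zs⌉₊ : ℝ)
  else if i ∈ T m g r zs then
    (if Sgt ≤ B ∧ B < Sge then (Sge - B) / g i
     else if B < Sgt then SH m g r s X i / g i
     else 0)
  else 0

/-- `cn_{zs}` is decent: for every strict ancestor `zt` of `zs`, the total cost of
the machines of types in `T(zs) ∩ A(zt)` is at most the cost of one type-`zt` machine. -/
def decent (m : ℕ) (g r : ℕ → ℝ) (s : ι → ℝ) (X : Finset ι) (zs : ℕ) : Prop :=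
  ∀ zt ∈ P m g r zs, zt ≠ zs →
    (∑ z ∈ (TIcc m g r zs).filter (fun z => z ∈ A m g r zt), cn m g r s X zs z * r z) ≤ r zt

/-- `z⋄(X)`: the least `z* ∈ P(k0(X))` such that `cn_{z*}` is decent. -/
def zdia (m : ℕ) (g r : ℕ → ℝ) (s : ι → ℝ) (X : Finset ι) : ℕ :=
  sInf {zs | zs ∈ P m g r (k0f m g s X) ∧ decent m g r s X zs}

/-- The child of `zd` whose subtree contains node `k`. -/
def chil (m : ℕ) (g r : ℕ → ℝ) (zd k : ℕ) : ℕ :=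
  sInf {i | p m g r i = zd ∧ k ∈ A m g r i}

/-- The node `i ∈ T(zd)` whose subtree contains node `k`. -/
def idxT (m : ℕ) (g r : ℕ → ℝ) (zd k : ℕ) : ℕ :=
  sInf {i | i ∈ T m g r zd ∧ k ∈ A m g r i}

/-- The children `f(zd)` of node `zd`, as a `Finset`. -/
def fchFin (m : ℕ) (g r : ℕ → ℝ) (zd : ℕ) : Finset ℕ :=
  (Finset.Icc 1 m).filter (fun z => p m g r z = zd)

/-- The cost `r̃(X)(J)` charged to the job `J` of the job set `X`. -/
def charge (m : ℕ) (g r : ℕ → ℝ) (s : ι → ℝ) (X : Finset ι) (J : ι) : ℝ :=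
  let zd := zdia m g r s X
  let ρ : ℕ → ℝ := fun i => r i / g i
  let Hh := X.filter (fun J' => mty m g s J' = zd)
  let c : ℝ := Ssum s Hh * ρ zd + ∑ i ∈ fchFin m g r zd, SH m g r s X i * ρ i
  if mty m g s J ∈ A m g r zd then
    if g zd ≤ SH m g r s X zd then s J * ρ zd
    else if r zd < c then
      if mty m g s J = zd then s J * ρ zd
      else
        s J * (ρ (chil m g r zd (mty m g s J)) -
          (ρ (chil m g r zd (mty m g s J)) - ρ zd) *
            ((c - r zd) /
              (∑ i ∈ fchFin m g r zd, ∑ J' ∈ H m g r s i X, s J' * (ρ i - ρ zd))))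
    else
      if mty m g s J = zd then s J * ρ zd * (1 + (r zd - c) / (Ssum s Hh * ρ zd))
      else s J * ρ (chil m g r zd (mty m g s J))
  else s J * ρ (idxT m g r zd (mty m g s J))

/-! ### Jobs with active intervals -/

/-- `span(X) := ⋃_{J ∈ X} [Ilo J, Ihi J)`. -/
def spanSet (Ilo Ihi : ι → ℝ) (X : Finset ι) : Set ℝ :=
  ⋃ J ∈ X, Set.Ico (Ilo J) (Ihi J)

/-- `X(t)`: the jobs of `X` active at time `t`. -/
def activeJ (Ilo Ihi : ι → ℝ) (X : Finset ι) (t : ℝ) : Finset ι :=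
  X.filter (fun J => Ilo J ≤ t ∧ t < Ihi J)

/-- `X(t) ∪ ℋ(t)` where `ℋ = {F_d(J) : J ∈ X}`: the original jobs are embedded
via `Sum.inl`, and the artificial job `F_d(J)` (with size `s J` and active set
`[Ihi J, Ihi J + d) ∩ span(X)`) is represented by `Sum.inr J`. -/
def activeJH (Ilo Ihi : ι → ℝ) (X : Finset ι) (d t : ℝ) : Finset (ι ⊕ ι) :=
  (X.image Sum.inl ∪ X.image Sum.inr).filter
    (fun x => Sum.elim
      (fun J => Ilo J ≤ t ∧ t < Ihi J)
      (fun J => (Ihi J ≤ t ∧ t < Ihi J + d) ∧ t ∈ spanSet Ilo Ihi X) x)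

end

end BSHM

namespace BSHM

/-! ### The forest of machine types -/

section Forest

variable {m : ℕ} {g r : ℕ → ℝ}

theorem p_mem_pset {i : ℕ} (h : pdef m g r i) : p m g r i ∈ pset m g r i :=
  Nat.sInf_mem h

theorem pdef_of_p_pos {i : ℕ} (h : 0 < p m g r i) : pdef m g r i := by
  by_contra hn
  have : pset m g r i = ∅ := Set.not_nonempty_iff_eq_empty.mp hn
  simp [p, this] at h

theorem p_le_of_mem {i j : ℕ} (h : j ∈ pset m g r i) : p m g r i ≤ j :=
  Nat.sInf_le h

/-- Iterated parents are exactly the strict records of the normalized cost rate. -/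
theorem mem_P_iff {a c : ℕ} :
    c ∈ P m g r a ↔
      c = a ∨ (a < c ∧ c ≤ m ∧ ∀ j, a ≤ j → j < c → r c / g c < r j / g j) := by
  constructor
  · intro h
    change Relation.ReflTransGen _ _ _ at h
    induction h with
    | refl => exact Or.inl rfl
    | @tail b c _ hbc ih =>
      obtain ⟨hb, rfl⟩ := hbc
      obtain ⟨h1, h2, h3⟩ := p_mem_pset hb
      have hmin : ∀ j, b ≤ j → j < p m g r b → r b / g b ≤ r j / g j := by
        intro j hj hjp
        rcases hj.eq_or_lt with rfl | hj
        · exact le_rfl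
        · by_contra hlt
          exact absurd (p_le_of_mem ⟨by omega, hj, not_le.mp hlt⟩) (not_le.mpr hjp)
      refine Or.inr ?_
      rcases ih with rfl | ⟨h4, h5, h6⟩
      · exact ⟨h2, h1, fun j hj hjp => h3.trans_le (hmin j hj hjp)⟩
      · refine ⟨h4.trans h2, h1, fun j hj hjp => ?_⟩
        rcases lt_or_ge j b with hjb | hjb
        · exact h3.trans (h6 j hj hjb)
        · exact h3.trans_le (hmin j hjb hjp)
  · rintro (rfl | ⟨h1, h2, h3⟩)
    · exact Relation.ReflTransGen.refl
    · have hind : ∀ n a, c - a ≤ n → a ≤ c →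
          (∀ j, a ≤ j → j < c → r c / g c < r j / g j) → c ∈ P m g r a := by
        intro n
        induction n with
        | zero =>
          intro a hn hac _
          obtain rfl : a = c := by omega
          exact Relation.ReflTransGen.refl
        | succ n ih =>
          intro a hn hac hrec
          rcases hac.eq_or_lt with rfl | hac
          · exact Relation.ReflTransGen.refl
          · have hc : c ∈ pset m g r a := ⟨h2, hac, hrec a le_rfl hac⟩
            have hpa : p m g r a ≤ c := p_le_of_mem hc
            have hap : a < p m g r a := (p_mem_pset ⟨c, hc⟩).2.1
            exact Relation.ReflTransGen.head ⟨⟨c, hc⟩, rfl⟩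
              (ih _ (by omega) hpa fun j hj => hrec j (by omega))
      exact hind _ a le_rfl h1.le h3

theorem le_of_mem_P {a c : ℕ} (h : c ∈ P m g r a) : a ≤ c := by
  rcases mem_P_iff.mp h with rfl | h
  · exact le_rfl
  · exact h.1.le

theorem le_m_of_mem_P {a c : ℕ} (ha : a ≤ m) (h : c ∈ P m g r a) : c ≤ m := by
  rcases mem_P_iff.mp h with rfl | h
  · exact ha
  · exact h.2.1

theorem rate_le_of_mem_P {a c : ℕ} (h : c ∈ P m g r a) : r c / g c ≤ r a / g a := by
  rcases mem_P_iff.mp h with rfl | h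
  · exact le_rfl
  · exact (h.2.2 a le_rfl h.1).le

theorem rate_lt_of_mem_P {a j c : ℕ} (h : c ∈ P m g r a) (haj : a ≤ j) (hjc : j < c) :
    r c / g c < r j / g j := by
  rcases mem_P_iff.mp h with rfl | h
  · omega
  · exact h.2.2 j haj hjc

/-- Subtrees are contiguous. -/
theorem mem_P_of_between {a b c : ℕ} (h : c ∈ P m g r a) (hab : a ≤ b) (hbc : b ≤ c) :
    c ∈ P m g r b := by
  rcases hbc.eq_or_lt with rfl | hbc
  · exact Relation.ReflTransGen.refl
  · rcases mem_P_iff.mp h with rfl | h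
    · omega
    · exact mem_P_iff.mpr (Or.inr ⟨hbc, h.2.1, fun j hj => h.2.2 j (hab.trans hj)⟩)

theorem mem_P_trans {a b c : ℕ} (hab : b ∈ P m g r a) (hbc : c ∈ P m g r b) :
    c ∈ P m g r a :=
  Relation.ReflTransGen.trans hab hbc

theorem exists_greatest_ancestor_le {k z : ℕ} (hkz : k ≤ z) :
    ∃ e ∈ P m g r k, e ≤ z ∧ ∀ c ∈ P m g r k, c ≤ z → c ≤ e := by
  have hne : ((Finset.Icc k z).filter (fun e => e ∈ P m g r k)).Nonempty :=
    ⟨k, Finset.mem_filter.mpr ⟨Finset.mem_Icc.mpr ⟨le_rfl, hkz⟩, Relation.ReflTransGen.refl⟩⟩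
  obtain ⟨e, he, hmax⟩ := Finset.exists_max_image _ id hne
  simp only [Finset.mem_filter, Finset.mem_Icc, id] at he hmax
  exact ⟨e, he.2, he.1.2, fun c hc hcz => hmax c ⟨⟨le_of_mem_P hc, hcz⟩, hc⟩⟩

theorem exists_root {k : ℕ} (hk : k ≤ m) : ∃ z ∈ P m g r k, ∀ c ∈ P m g r z, c = z := by
  obtain ⟨e, he, -, hmax⟩ := exists_greatest_ancestor_le (m := m) (g := g) (r := r) hk
  exact ⟨e, he, fun c hc => le_antisymm
    (hmax c (mem_P_trans he hc) (le_m_of_mem_P hk (mem_P_trans he hc))) (le_of_mem_P hc)⟩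

/-- `T(k)` consists of the suffix minima of the normalized cost rate on `[1, k]`. -/
theorem mem_T_iff {k i : ℕ} (hk1 : 1 ≤ k) (hkm : k ≤ m) :
    i ∈ T m g r k ↔ 1 ≤ i ∧ i ≤ k ∧ ∀ j, i < j → j ≤ k → r i / g i ≤ r j / g j := by
  constructor
  · intro h
    rcases h with h | h
    · obtain rfl : i = k := h
      exact ⟨hk1, le_rfl, fun j _ _ => by omega⟩
    · simp only [Set.mem_iUnion] at h
      obtain ⟨z, hz, h1, -, hiz, hp⟩ := h
      have hzm := le_m_of_mem_P hkm hz
      have key : ∀ j, i < j → j ≤ z → r i / g i ≤ r j / g j := by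
        intro j hij hjz
        by_contra hlt
        have hj : j ∈ pset m g r i := ⟨by omega, hij, not_le.mp hlt⟩
        have hpi := p_le_of_mem hj
        have hpi' := (p_mem_pset ⟨j, hj⟩).2.1
        have := (p_mem_pset (pdef_of_p_pos (m := m) (g := g) (r := r) (i := z) (by omega))).2.1
        omega
      refine ⟨h1, ?_, fun j hij hjk => key j hij (hjk.trans (le_of_mem_P hz))⟩
      by_contra hki
      exact absurd (key z hiz le_rfl) (not_le.mpr (rate_lt_of_mem_P hz (by omega) hiz))
  · rintro ⟨h1, hik, hmin⟩
    rcases hik.eq_or_lt with rfl | hik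
    · exact Or.inl rfl
    · refine Or.inr ?_
      simp only [Set.mem_iUnion]
      by_cases hd : pdef m g r i
      · obtain ⟨hq1, hq2, hq3⟩ := p_mem_pset hd
        have hkq : k < p m g r i := by
          by_contra hle
          exact absurd (hmin _ hq2 (not_lt.mp hle)) (not_le.mpr hq3)
        have hq : p m g r i ∈ P m g r k := by
          refine mem_P_iff.mpr (Or.inr ⟨hkq, hq1, fun j hj hjq => hq3.trans_le ?_⟩)
          by_contra hlt
          have := p_le_of_mem (m := m) (g := g) (r := r) (i := i) (j := j)
            ⟨by omega, by omega, not_le.mp hlt⟩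
          omega
        rcases Relation.ReflTransGen.cases_tail hq with h | ⟨z, hz, hzd, hzp⟩
        · omega
        · exact ⟨z, hz, h1, by omega, hik.trans_le (le_of_mem_P hz), hzp⟩
      · obtain ⟨z, hz, hroot⟩ := exists_root (m := m) (g := g) (r := r) hkm
        refine ⟨z, hz, h1, by omega, hik.trans_le (le_of_mem_P hz), ?_⟩
        have hi0 : p m g r i = 0 := by
          by_contra h0
          exact hd (pdef_of_p_pos (Nat.pos_of_ne_zero h0))
        have hz0 : p m g r z = 0 := by
          by_contra h0
          have hzd := pdef_of_p_pos (Nat.pos_of_ne_zero h0)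
          have h2 := (p_mem_pset hzd).2.1
          have := hroot (p m g r z) (Relation.ReflTransGen.single ⟨hzd, rfl⟩)
          omega
        rw [hi0, hz0]

theorem mem_TIcc_iff {k i : ℕ} (hk1 : 1 ≤ k) (hkm : k ≤ m) :
    i ∈ TIcc m g r k ↔ 1 ≤ i ∧ i ≤ k ∧ ∀ j, i < j → j ≤ k → r i / g i ≤ r j / g j := by
  rw [← mem_T_iff hk1 hkm, TIcc, Finset.mem_filter, and_iff_right_iff_imp]
  intro h
  have := (mem_T_iff hk1 hkm).mp h
  exact Finset.mem_insert_of_mem (Finset.mem_Icc.mpr ⟨this.1, by omega⟩)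

theorem greatest_ancestor_mem_T {k z e : ℕ} (hk1 : 1 ≤ k) (hzm : z ≤ m)
    (he : e ∈ P m g r k) (hez : e ≤ z) (hmax : ∀ c ∈ P m g r k, c ≤ z → c ≤ e) :
    e ∈ T m g r z := by
  have hke := le_of_mem_P he
  refine (mem_T_iff (by omega) hzm).mpr ⟨by omega, hez, fun j hej hjz => ?_⟩
  by_contra hlt
  have hj : j ∈ pset m g r e := ⟨by omega, hej, not_le.mp hlt⟩
  have h1 := p_le_of_mem hj
  have h2 := (p_mem_pset ⟨j, hj⟩).2.1
  have := hmax (p m g r e) (Relation.ReflTransGen.tail he ⟨⟨j, hj⟩, rfl⟩) (by omega)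
  omega

theorem idxT_spec {z k : ℕ} (hk1 : 1 ≤ k) (hkz : k ≤ z) (hzm : z ≤ m) :
    idxT m g r z k ∈ T m g r z ∧ k ∈ A m g r (idxT m g r z k) := by
  obtain ⟨e, he, hez, hmax⟩ := exists_greatest_ancestor_le (m := m) (g := g) (r := r) hkz
  exact Nat.sInf_mem (s := {i | i ∈ T m g r z ∧ k ∈ A m g r i})
    ⟨e, greatest_ancestor_mem_T hk1 hzm he hez hmax, hk1, by omega, he⟩

theorem chil_spec {z k : ℕ} (hk : k ∈ A m g r z) (hkz : k ≠ z) :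
    p m g r (chil m g r z k) = z ∧ k ∈ A m g r (chil m g r z k) := by
  apply Nat.sInf_mem (s := {i | p m g r i = z ∧ k ∈ A m g r i})
  rcases Relation.ReflTransGen.cases_tail hk.2.2 with h | ⟨e, he, -, hp⟩
  · exact absurd h.symm hkz
  · exact ⟨e, hp.symm, hk.1, hk.2.1, he⟩

/-- If `e` and `e'` are both ancestors of `k` and no ancestor of `e` lies in `(e, e']`,
then `e` is at least as cheap as `e'`. -/
theorem rate_le_of_common_descendant {k e e' : ℕ} (he : e ∈ P m g r k) (he' : e' ∈ P m g r k)
    (h : ∀ j, e < j → j ≤ e' → r e / g e ≤ r j / g j) : r e / g e ≤ r e' / g e' := by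
  rcases lt_or_ge e e' with hlt | hle
  · exact h e' hlt le_rfl
  · exact rate_le_of_mem_P (mem_P_of_between he (le_of_mem_P he') hle)

theorem rate_le_of_lt_p {e j : ℕ} (hjm : j ≤ m) (hej : e < j) (hjp : j < p m g r e) :
    r e / g e ≤ r j / g j := by
  by_contra hlt
  have := p_le_of_mem (m := m) (g := g) (r := r) (i := e) (j := j) ⟨hjm, hej, not_le.mp hlt⟩
  omega

theorem p_mem_P {e : ℕ} (h : 0 < p m g r e) : p m g r e ∈ P m g r e :=
  Relation.ReflTransGen.single ⟨pdef_of_p_pos h, rfl⟩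

theorem lt_p {e : ℕ} (h : 0 < p m g r e) : e < p m g r e :=
  (p_mem_pset (pdef_of_p_pos h)).2.1

/-- A node has at most one ancestor with a given parent. -/
theorem eq_of_p_eq {k e e' : ℕ} (he : e ∈ P m g r k) (he' : e' ∈ P m g r k)
    (hp : p m g r e = p m g r e') (hpos : 0 < p m g r e) : e = e' := by
  have h1 := lt_p hpos
  have h2 := lt_p (hp ▸ hpos)
  have key : ∀ {a b : ℕ}, a ∈ P m g r k → b ∈ P m g r k → b < p m g r a → a < b →
      0 < p m g r a → False := by
    intro a b ha hb hbp hab hpa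
    have hb' := mem_P_of_between hb (le_of_mem_P ha) hab.le
    rcases mem_P_iff.mp hb' with h | h
    · omega
    · have := rate_lt_of_mem_P hb' le_rfl hab
      exact absurd (rate_le_of_lt_p h.2.1 hab hbp) (not_le.mpr this)
  rcases lt_trichotomy e e' with h | h | h
  · exact (key he he' (by omega) h hpos).elim
  · exact h
  · exact (key he' he (by omega) h (by omega)).elim

end Forest

/-! ### Summation lemmas -/

/-- Abel summation: nonnegative upper partial sums against nonnegative increasing weights. -/
theorem sum_mul_nonneg_of_upper_sums (F : Finset ℕ) (w c : ℕ → ℝ)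
    (hw : ∀ a ∈ F, ∀ b ∈ F, a ≤ b → w a ≤ w b) (hw0 : ∀ a ∈ F, 0 ≤ w a)
    (hc : ∀ n ∈ F, 0 ≤ ∑ j ∈ F.filter (fun j => n ≤ j), c j) :
    0 ≤ ∑ j ∈ F, w j * c j := by
  suffices h : ∀ t, (∀ x ∈ F, t ≤ w x) → t * ∑ j ∈ F, c j ≤ ∑ j ∈ F, w j * c j by
    simpa using h 0 hw0
  clear hw0
  induction F using Finset.induction_on_min with
  | empty => simp
  | insert a F ha ih =>
    have haF : a ∉ F := fun h => (ha a h).false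
    have hall : 0 ≤ ∑ j ∈ insert a F, c j := by
      have := hc a (Finset.mem_insert_self _ _)
      rwa [Finset.filter_true_of_mem] at this
      intro x hx
      rcases Finset.mem_insert.mp hx with rfl | hx
      · exact le_rfl
      · exact (ha x hx).le
    have hF := ih (fun x hx b hb => hw x (by simp [hx]) b (by simp [hb]))
      (fun n hn => by
        have := hc n (by simp [hn])
        rwa [Finset.filter_insert, if_neg (not_le.mpr (ha n hn))] at this)
      (w a) (fun x hx => hw a (by simp) x (by simp [hx]) (ha x hx).le)
    intro t ht
    have hta := mul_le_mul_of_nonneg_right (ht a (by simp)) hall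
    rw [Finset.sum_insert haF] at hta ⊢
    rw [Finset.sum_insert haF]
    nlinarith

theorem sum_filter_ge_telescope (F : Finset ℕ) (f : ℕ → ℝ) (N : ℕ) (hN : ∀ j ∈ F, j < N)
    (hf : ∀ j, j ∉ F → f j = f (j + 1)) {n : ℕ} (hn : n ≤ N) :
    ∑ j ∈ F.filter (fun j => n ≤ j), (f j - f (j + 1)) = f n - f N := by
  have h1 : ∑ j ∈ F.filter (fun j => n ≤ j), (f j - f (j + 1))
      = ∑ j ∈ Finset.Ico n N, (f j - f (j + 1)) := by
    apply Finset.sum_subset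
    · intro j hj
      rw [Finset.mem_filter] at hj
      exact Finset.mem_Ico.mpr ⟨hj.2, hN j hj.1⟩
    · intro j hj hjF
      have : j ∉ F := fun h => hjF (Finset.mem_filter.mpr ⟨h, (Finset.mem_Ico.mp hj).1⟩)
      rw [hf j this, sub_self]
  rw [h1, ← neg_inj, ← Finset.sum_neg_distrib, neg_sub]
  simp only [neg_sub]
  exact Finset.sum_Ico_sub f hn

/-! ### Job sets -/

section Jobs

variable {ι κ : Type*} {m : ℕ} {g r : ℕ → ℝ} {s : ι → ℝ} {s' : κ → ℝ}
  {X : Finset ι} {Y : Finset κ} {e : ι → κ}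

/-- There is a machine type, and capacities and cost rates are positive. -/
structure Machines (m : ℕ) (g r : ℕ → ℝ) : Prop where
  one_le : 1 ≤ m
  g_pos : ∀ i, 1 ≤ i → i ≤ m → 0 < g i
  r_pos : ∀ i, 1 ≤ i → i ≤ m → 0 < r i

/-- All job sizes in `X` lie in `(0, g(m)]`. -/
def Sized (m : ℕ) (g : ℕ → ℝ) (s : ι → ℝ) (X : Finset ι) : Prop :=
  ∀ J ∈ X, 0 < s J ∧ s J ≤ g m

/-- `e` embeds the job set `X` into `Y`, preserving sizes. -/
structure Embeds (s : ι → ℝ) (s' : κ → ℝ) (X : Finset ι) (Y : Finset κ) (e : ι → κ) : Prop where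
  inj : Set.InjOn e X
  mem : ∀ J ∈ X, e J ∈ Y
  size : ∀ J ∈ X, s' (e J) = s J

theorem Embeds.sized (hE : Embeds s s' X Y e) (hY : Sized m g s' Y) : Sized m g s X :=
  fun J hJ => hE.size J hJ ▸ hY _ (hE.mem J hJ)

theorem Embeds.mty_eq (hE : Embeds s s' X Y e) {J : ι} (hJ : J ∈ X) :
    mty m g s' (e J) = mty m g s J := by
  rw [mty, mty, hE.size J hJ]

theorem mty_spec (hm : 1 ≤ m) (hX : Sized m g s X) {J : ι} (hJ : J ∈ X) :
    1 ≤ mty m g s J ∧ mty m g s J ≤ m ∧ s J ≤ g (mty m g s J) :=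
  Nat.sInf_mem (s := {z | 1 ≤ z ∧ z ≤ m ∧ s J ≤ g z}) ⟨m, hm, le_rfl, (hX J hJ).2⟩

theorem lt_size_of_lt_mty {J : ι} {i : ℕ} (hi : 1 ≤ i) (him : i ≤ m) (h : i < mty m g s J) :
    g i < s J := by
  by_contra hle
  have : mty m g s J ≤ i := Nat.sInf_le ⟨hi, him, not_lt.mp hle⟩
  omega

theorem Ssum_filter_nonneg (hX : Sized m g s X) (Q : ι → Prop) [DecidablePred Q] :
    0 ≤ Ssum s (X.filter Q) :=
  Finset.sum_nonneg fun J hJ => (hX J (Finset.mem_filter.mp hJ).1).1.le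

theorem SH_nonneg (hX : Sized m g s X) (z : ℕ) : 0 ≤ SH m g r s X z :=
  Ssum_filter_nonneg hX _

theorem Embeds.Ssum_filter_le (hE : Embeds s s' X Y e) (hY : Sized m g s' Y) (Q : ℕ → Prop)
    [DecidablePred Q] :
    Ssum s (X.filter fun J => Q (mty m g s J)) ≤ Ssum s' (Y.filter fun J => Q (mty m g s' J)) := by
  have h1 : Ssum s (X.filter fun J => Q (mty m g s J))
      = ∑ K ∈ (X.filter fun J => Q (mty m g s J)).image e, s' K := by
    rw [Finset.sum_image (hE.inj.mono (Finset.coe_subset.mpr (Finset.filter_subset _ _))), Ssum]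
    exact Finset.sum_congr rfl fun J hJ => (hE.size J (Finset.mem_filter.mp hJ).1).symm
  rw [h1]
  apply Finset.sum_le_sum_of_subset_of_nonneg
  · intro K hK
    obtain ⟨J, hJ, rfl⟩ := Finset.mem_image.mp hK
    obtain ⟨hJ, hQ⟩ := Finset.mem_filter.mp hJ
    exact Finset.mem_filter.mpr ⟨hE.mem J hJ, by rwa [hE.mty_eq hJ]⟩
  · exact fun K hK _ => (hY K (Finset.mem_filter.mp hK).1).1.le

theorem Embeds.SH_le (hE : Embeds s s' X Y e) (hY : Sized m g s' Y) (z : ℕ) :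
    SH m g r s X z ≤ SH m g r s' Y z :=
  hE.Ssum_filter_le hY (fun k => k ∈ A m g r z)

theorem mty_le_k0f {J : ι} (hJ : J ∈ X) : mty m g s J ≤ k0f m g s X :=
  Finset.le_sup (f := fun J => mty m g s J) hJ

theorem exists_mty_eq_k0f (hX : X.Nonempty) : ∃ J ∈ X, mty m g s J = k0f m g s X := by
  obtain ⟨J, hJ, h⟩ := Finset.exists_mem_eq_sup X hX (fun J => mty m g s J)
  exact ⟨J, hJ, h.symm⟩

theorem Embeds.k0f_le (hE : Embeds s s' X Y e) : k0f m g s X ≤ k0f m g s' Y :=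
  Finset.sup_le fun J hJ => hE.mty_eq hJ ▸ mty_le_k0f (hE.mem J hJ)

theorem zdia_spec (hm : 1 ≤ m) (hX : Sized m g s X) (hne : X.Nonempty) :
    zdia m g r s X ∈ P m g r (k0f m g s X) ∧ decent m g r s X (zdia m g r s X) := by
  obtain ⟨J, hJ, h⟩ := exists_mty_eq_k0f (m := m) (g := g) (s := s) hne
  obtain ⟨z, hz, hroot⟩ := exists_root (m := m) (g := g) (r := r)
    (h ▸ (mty_spec hm hX hJ).2.1)
  exact Nat.sInf_mem (s := {zs | zs ∈ P m g r (k0f m g s X) ∧ decent m g r s X zs})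
    ⟨z, hz, fun zt hzt hne => absurd (hroot zt hzt) hne⟩

theorem mty_le_zdia (hm : 1 ≤ m) (hX : Sized m g s X) {J : ι} (hJ : J ∈ X) :
    mty m g s J ≤ zdia m g r s X :=
  (mty_le_k0f hJ).trans (le_of_mem_P (zdia_spec hm hX ⟨J, hJ⟩).1)

theorem zdia_le_m (hm : 1 ≤ m) (hX : Sized m g s X) (hne : X.Nonempty) :
    zdia m g r s X ≤ m := by
  obtain ⟨J, hJ, h⟩ := exists_mty_eq_k0f (m := m) (g := g) (s := s) hne
  exact le_m_of_mem_P (h ▸ (mty_spec hm hX hJ).2.1) (zdia_spec hm hX hne).1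

theorem SH_le_ceil (hM : Machines m g r) {z : ℕ} (h1 : 1 ≤ z) (h2 : z ≤ m) :
    SH m g r s X z ≤ (⌈SH m g r s X z / g z⌉₊ : ℝ) * g z :=
  (div_le_iff₀ (hM.g_pos z h1 h2)).mp (Nat.le_ceil _)

theorem ceil_le_SH_add (hM : Machines m g r) (hX : Sized m g s X) {z : ℕ} (h1 : 1 ≤ z)
    (h2 : z ≤ m) : (⌈SH m g r s X z / g z⌉₊ : ℝ) * g z ≤ SH m g r s X z + g z := by
  have hg := hM.g_pos z h1 h2
  have h := (Nat.ceil_lt_add_one (div_nonneg (SH_nonneg (r := r) hX z) hg.le)).le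
  calc _ ≤ (SH m g r s X z / g z + 1) * g z := mul_le_mul_of_nonneg_right h hg.le
    _ = _ := by field_simp

theorem cn_eq_zero {zs i : ℕ} (h1 : 1 ≤ zs) (h2 : zs ≤ m) (hi : i ∉ TIcc m g r zs) :
    cn m g r s X zs i = 0 := by
  have hiT : i ∉ T m g r zs := by rwa [mem_T_iff h1 h2, ← mem_TIcc_iff h1 h2]
  have hne : i ≠ zs := by rintro rfl; exact hiT (Or.inl rfl)
  simp [cn, hne, hiT]

/-- The capacity provided by `cn` on an upper segment of `T(zs)`. -/
theorem sum_cn_mul_g (hM : Machines m g r) (hX : Sized m g s X) {zs n : ℕ} (h1 : 1 ≤ zs)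
    (h2 : zs ≤ m) (hn : n ≤ zs) :
    ∑ j ∈ (TIcc m g r zs).filter (fun j => n ≤ j), cn m g r s X zs j * g j =
      max (∑ j ∈ (TIcc m g r zs).filter (fun j => n ≤ j), SH m g r s X j)
        ((⌈SH m g r s X zs / g zs⌉₊ : ℝ) * g zs) := by
  set B : ℝ := (⌈SH m g r s X zs / g zs⌉₊ : ℝ) * g zs with hB
  have hSB : SH m g r s X zs ≤ B := SH_le_ceil hM h1 h2
  have hzs : zs ∈ TIcc m g r zs := (mem_TIcc_iff h1 h2).mpr ⟨h1, le_rfl, fun j _ _ => by omega⟩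
  let S : ℕ → ℝ := fun n => ∑ j ∈ (TIcc m g r zs).filter (fun j => n ≤ j), SH m g r s X j
  let f : ℕ → ℝ := fun n => if n ≤ zs then max (S n) B else 0
  have hfilter : ∀ j, (TIcc m g r zs).filter (fun i => j < i)
      = (TIcc m g r zs).filter (fun i => j + 1 ≤ i) := fun j => by simp only [Nat.succ_le_iff]
  have hSsucc : ∀ j, j ∉ TIcc m g r zs → S j = S (j + 1) := by
    intro j hj
    refine Finset.sum_congr (Finset.filter_congr fun i hi => ?_) fun _ _ => rfl
    have : i ≠ j := by rintro rfl; exact hj hi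
    omega
  have hSmem : ∀ j, j ∈ TIcc m g r zs → S j = SH m g r s X j + S (j + 1) := by
    intro j hj
    have : (TIcc m g r zs).filter (fun i => j ≤ i)
        = insert j ((TIcc m g r zs).filter (fun i => j + 1 ≤ i)) := by
      ext i
      simp only [Finset.mem_filter, Finset.mem_insert]
      constructor
      · rintro ⟨hi, hji⟩
        rcases hji.eq_or_lt with h | h
        · exact Or.inl h.symm
        · exact Or.inr ⟨hi, h⟩
      · rintro (rfl | ⟨hi, h⟩)
        · exact ⟨hj, le_rfl⟩
        · exact ⟨hi, by omega⟩
    simp only [S, this]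
    rw [Finset.sum_insert (by simp)]
  have hStop : S (zs + 1) = 0 := by
    apply Finset.sum_eq_zero
    intro j hj
    rw [Finset.mem_filter, mem_TIcc_iff h1 h2] at hj
    omega
  have hterm : ∀ j ∈ TIcc m g r zs, cn m g r s X zs j * g j = f j - f (j + 1) := by
    intro j hj
    have hj' := (mem_TIcc_iff h1 h2).mp hj
    have hgj : g j ≠ 0 := (hM.g_pos j hj'.1 (by omega)).ne'
    rcases hj'.2.1.eq_or_lt with rfl | hlt
    · have hSj : S j ≤ B := by rw [hSmem j hj, hStop, add_zero]; exact hSB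
      simp [f, cn, max_eq_right hSj, ← hB]
    · have hjT : j ∈ T m g r zs := (mem_T_iff h1 h2).mpr hj'
      have hSge : ∑ z ∈ (TIcc m g r zs).filter (fun z => j ≤ z), SH m g r s X z = S j := rfl
      have hSgt : ∑ z ∈ (TIcc m g r zs).filter (fun z => j < z), SH m g r s X z = S (j + 1) := by
        rw [hfilter]
      have hrec := hSmem j hj
      simp only [cn, hlt.ne, hjT, if_false, if_true, hSge, hSgt, ← hB, f, hlt.le,
        Nat.succ_le_of_lt hlt]
      split_ifs with ha hb
      · rw [max_eq_left ha.2.le, max_eq_right ha.1, div_mul_cancel₀ _ hgj]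
      · have : B ≤ S j := by
          have := SH_nonneg (r := r) hX j
          linarith
        rw [max_eq_left this, max_eq_left hb.le, div_mul_cancel₀ _ hgj]
        linarith
      · have : S j ≤ B := by
          by_contra hlt'
          exact ha ⟨not_lt.mp hb, not_le.mp hlt'⟩
        rw [max_eq_right this, max_eq_right (not_lt.mp hb)]
        ring
  rw [Finset.sum_congr rfl fun j hj => hterm j (Finset.mem_filter.mp hj).1,
    sum_filter_ge_telescope _ f (zs + 1) (fun j hj => by
      have := (mem_TIcc_iff h1 h2).mp hj
      omega) (fun j hj => ?_) (by omega)]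
  · simp only [f, if_pos hn, S]
    simp
  · have hne : j ≠ zs := by rintro rfl; exact hj hzs
    simp only [f]
    rcases lt_or_gt_of_ne hne with h | h
    · rw [if_pos h.le, if_pos (Nat.succ_le_of_lt h), hSsucc j hj]
    · rw [if_neg (by omega), if_neg (by omega)]

/-- Enlarging the job set does not decrease the highest machine type in use. -/
theorem Embeds.zdia_le (hM : Machines m g r) (hE : Embeds s s' X Y e) (hY : Sized m g s' Y)
    (hne : X.Nonempty) : zdia m g r s X ≤ zdia m g r s' Y := by
  have hX := hE.sized hY
  have hneY : Y.Nonempty := hne.elim fun J hJ => ⟨e J, hE.mem J hJ⟩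
  have hm := hM.one_le
  obtain ⟨hw, hdec⟩ := zdia_spec (r := r) hm hY hneY
  have hwm := zdia_le_m (r := r) hm hY hneY
  set w := zdia m g r s' Y
  obtain ⟨J, hJ, hJk⟩ := exists_mty_eq_k0f (m := m) (g := g) (s := s) hne
  obtain ⟨K, hK, hKk⟩ := exists_mty_eq_k0f (m := m) (g := g) (s := s') hneY
  have hkY := mty_spec hm hY hK
  have hk1 : 1 ≤ k0f m g s X := hJk ▸ (mty_spec hm hX hJ).1
  have hkw := le_of_mem_P hw
  obtain ⟨i, hi, hiw, hmax⟩ := exists_greatest_ancestor_le (m := m) (g := g) (r := r)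
    (hE.k0f_le.trans (le_of_mem_P hw))
  have hiT := (mem_T_iff (by omega) hwm).mp (greatest_ancestor_mem_T hk1 hwm hi hiw hmax)
  refine le_trans (Nat.sInf_le ⟨hi, ?_⟩) hiw
  have hi1 := hiT.1
  have him : i ≤ m := hiw.trans hwm
  have hw1 : 1 ≤ w := by omega
  intro zt hzt hzti
  have hizt : i < zt := lt_of_le_of_ne (le_of_mem_P hzt) (Ne.symm hzti)
  have hwzt : w < zt := by
    by_contra hle
    exact absurd (hiT.2.2 zt hizt (not_lt.mp hle)) (not_le.mpr (rate_lt_of_mem_P hzt le_rfl hizt))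
  refine le_trans ?_ (hdec zt (mem_P_of_between hzt hiw hwzt.le) hwzt.ne')
  have hsub : TIcc m g r i ⊆ TIcc m g r w := by
    intro j hj
    obtain ⟨h1, h2, h3⟩ := (mem_TIcc_iff hi1 him).mp hj
    refine (mem_TIcc_iff hw1 hwm).mpr ⟨h1, by omega, fun l hjl hlw => ?_⟩
    rcases le_or_gt l i with hl | hl
    · exact h3 l hjl hl
    · refine le_trans ?_ (hiT.2.2 l hl hlw)
      rcases h2.eq_or_lt with rfl | h2
      · exact le_rfl
      · exact h3 i h2 le_rfl
  set F := (TIcc m g r w).filter (fun z => z ∈ A m g r zt) with hF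
  have hext : ∑ z ∈ (TIcc m g r i).filter (fun z => z ∈ A m g r zt), cn m g r s X i z * r z
      = ∑ z ∈ F, cn m g r s X i z * r z := by
    apply Finset.sum_subset (Finset.filter_subset_filter _ hsub)
    intro z hz hzi
    rw [cn_eq_zero hi1 him, zero_mul]
    exact fun h => hzi (Finset.mem_filter.mpr ⟨h, (Finset.mem_filter.mp hz).2⟩)
  rw [hext]
  have hFT : ∀ z ∈ F, 1 ≤ z ∧ z ≤ w ∧ ∀ j, z < j → j ≤ w → r z / g z ≤ r j / g j :=
    fun z hz => (mem_TIcc_iff hw1 hwm).mp (Finset.mem_filter.mp hz).1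
  have hAbel := sum_mul_nonneg_of_upper_sums F (fun z => r z / g z)
    (fun z => cn m g r s' Y w z * g z - cn m g r s X i z * g z)
    (fun a ha b hb hab => by
      rcases hab.eq_or_lt with rfl | hab
      · exact le_rfl
      · exact (hFT a ha).2.2 b hab (hFT b hb).2.1)
    (fun a ha => by
      have := hFT a ha
      exact (div_pos (hM.r_pos a this.1 (by omega)) (hM.g_pos a this.1 (by omega))).le)
    (fun n hn => by
      have hnT := hFT n hn
      have hnA := (Finset.mem_filter.mp hn).2
      have hFn : F.filter (fun j => n ≤ j) = (TIcc m g r w).filter (fun j => n ≤ j) := by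
        ext j
        simp only [hF, Finset.mem_filter]
        constructor
        · exact fun h => ⟨h.1.1, h.2⟩
        · intro h
          have hj := (mem_TIcc_iff hw1 hwm).mp h.1
          exact ⟨⟨h.1, hj.1, by omega, mem_P_of_between hnA.2.2 h.2 (by omega)⟩, h.2⟩
      rw [Finset.sum_sub_distrib, sub_nonneg, hFn, sum_cn_mul_g hM hY hw1 hwm hnT.2.1]
      have hupper : (TIcc m g r i).filter (fun j => n ≤ j)
          ⊆ (TIcc m g r w).filter (fun j => n ≤ j) := Finset.filter_subset_filter _ hsub
      have hred : ∑ j ∈ (TIcc m g r w).filter (fun j => n ≤ j), cn m g r s X i j * g j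
          = ∑ j ∈ (TIcc m g r i).filter (fun j => n ≤ j), cn m g r s X i j * g j := by
        refine (Finset.sum_subset hupper fun j hj hji => ?_).symm
        rw [cn_eq_zero hi1 him, zero_mul]
        exact fun h => hji (Finset.mem_filter.mpr ⟨h, (Finset.mem_filter.mp hj).2⟩)
      rw [hred]
      rcases lt_or_ge i n with hin | hni
      · have hempty : (TIcc m g r i).filter (fun j => n ≤ j) = ∅ := by
          apply Finset.filter_false_of_mem
          intro j hj
          have := (mem_TIcc_iff hi1 him).mp hj
          omega
        rw [hempty, Finset.sum_empty]
        exact le_max_of_le_left (Finset.sum_nonneg fun j _ => SH_nonneg hY j)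
      · rw [sum_cn_mul_g hM hX hi1 him hni]
        refine max_le (le_max_of_le_left ?_) ?_
        · exact (Finset.sum_le_sum fun j _ => hE.SH_le hY j).trans
            (Finset.sum_le_sum_of_subset_of_nonneg hupper fun j _ _ => SH_nonneg hY j)
        · rcases hiw.eq_or_lt with hiw | hiw
          · apply le_max_of_le_right
            rw [hiw]
            have hgw := (hM.g_pos w hw1 hwm).le
            refine mul_le_mul_of_nonneg_right (Nat.cast_le.mpr (Nat.ceil_le_ceil ?_)) hgw
            exact div_le_div_of_nonneg_right (hE.SH_le hY w) hgw
          · apply le_max_of_le_left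
            have hiK : i < mty m g s' K := by
              by_contra hle
              rw [hKk] at hle
              exact absurd (hiT.2.2 w hiw le_rfl)
                (not_le.mpr (rate_lt_of_mem_P hw (not_lt.mp hle) hiw))
            have hKsize := lt_size_of_lt_mty hi1 him hiK
            have hKw : s' K ≤ SH m g r s' Y w :=
              Finset.single_le_sum (f := s')
                (fun L hL => (hY L (Finset.mem_filter.mp hL).1).1.le)
                (Finset.mem_filter.mpr ⟨hK, hkY.1, hkY.2.1, hKk ▸ hw⟩)
            have hpair : ({i, w} : Finset ℕ) ⊆ (TIcc m g r w).filter (fun j => n ≤ j) := by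
              intro j hj
              rw [Finset.mem_insert, Finset.mem_singleton] at hj
              rw [Finset.mem_filter, mem_TIcc_iff hw1 hwm]
              rcases hj with rfl | rfl
              · exact ⟨hiT, hni⟩
              · exact ⟨⟨hw1, le_rfl, fun l _ _ => by omega⟩, by omega⟩
            have hsum := Finset.sum_le_sum_of_subset_of_nonneg hpair
              (f := fun j => SH m g r s' Y j) fun j _ _ => SH_nonneg hY j
            rw [Finset.sum_pair hiw.ne] at hsum
            have := ceil_le_SH_add hM hX hi1 him
            have := hE.SH_le (r := r) hY i
            linarith)
  rw [← sub_nonneg, ← Finset.sum_sub_distrib]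
  refine hAbel.trans_eq (Finset.sum_congr rfl fun z hz => ?_)
  have := hFT z hz
  have := (hM.g_pos z this.1 (by omega)).ne'
  field_simp


/-- The cost `c` of serving `H_z(X)` with jobs of exact type `z` on type `z` and all other jobs
on the children of `z`. -/
noncomputable def childCost (m : ℕ) (g r : ℕ → ℝ) (s : ι → ℝ) (X : Finset ι) (z : ℕ) : ℝ :=
  Ssum s (X.filter fun J => mty m g s J = z) * (r z / g z) +
    ∑ i ∈ fchFin m g r z, SH m g r s X i * (r i / g i)

/-- The amount saved when all jobs below `z` are charged at the rate of `z`. -/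
noncomputable def childExcess (m : ℕ) (g r : ℕ → ℝ) (s : ι → ℝ) (X : Finset ι) (z : ℕ) : ℝ :=
  ∑ i ∈ fchFin m g r z, ∑ J ∈ H m g r s i X, s J * (r i / g i - r z / g z)

theorem charge_eq (J : ι) :
    charge m g r s X J =
      if mty m g s J ∈ A m g r (zdia m g r s X) then
        if g (zdia m g r s X) ≤ SH m g r s X (zdia m g r s X) then
          s J * (r (zdia m g r s X) / g (zdia m g r s X))
        else if r (zdia m g r s X) < childCost m g r s X (zdia m g r s X) then
          if mty m g s J = zdia m g r s X then s J * (r (zdia m g r s X) / g (zdia m g r s X))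
          else
            s J * (r (chil m g r (zdia m g r s X) (mty m g s J)) /
                g (chil m g r (zdia m g r s X) (mty m g s J)) -
              (r (chil m g r (zdia m g r s X) (mty m g s J)) /
                g (chil m g r (zdia m g r s X) (mty m g s J)) -
                  r (zdia m g r s X) / g (zdia m g r s X)) *
                ((childCost m g r s X (zdia m g r s X) - r (zdia m g r s X)) /
                  childExcess m g r s X (zdia m g r s X)))
        else
          if mty m g s J = zdia m g r s X then
            s J * (r (zdia m g r s X) / g (zdia m g r s X)) *
              (1 + (r (zdia m g r s X) - childCost m g r s X (zdia m g r s X)) /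
                (Ssum s (X.filter fun J => mty m g s J = zdia m g r s X) *
                  (r (zdia m g r s X) / g (zdia m g r s X))))
          else
            s J * (r (chil m g r (zdia m g r s X) (mty m g s J)) /
              g (chil m g r (zdia m g r s X) (mty m g s J)))
      else
        s J * (r (idxT m g r (zdia m g r s X) (mty m g s J)) /
          g (idxT m g r (zdia m g r s X) (mty m g s J))) := rfl

theorem p_eq_of_mem_fchFin {z i : ℕ} (h : i ∈ fchFin m g r z) : p m g r i = z :=
  (Finset.mem_filter.mp h).2

theorem rate_le_of_p_eq {z i : ℕ} (hz : 1 ≤ z) (h : p m g r i = z) :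
    r z / g z ≤ r i / g i := by
  have := rate_le_of_mem_P (p_mem_P (m := m) (g := g) (r := r) (e := i) (by omega))
  rwa [h] at this

theorem childExcess_eq (z : ℕ) :
    childExcess m g r s X z =
      ∑ i ∈ fchFin m g r z, SH m g r s X i * (r i / g i - r z / g z) := by
  simp only [childExcess, SH, Ssum, Finset.sum_mul]

theorem childCost_sub_childExcess (z : ℕ) :
    childCost m g r s X z - childExcess m g r s X z =
      (Ssum s (X.filter fun J => mty m g s J = z) + ∑ i ∈ fchFin m g r z, SH m g r s X i) *
        (r z / g z) := by
  simp only [childExcess_eq, childCost, mul_sub, Finset.sum_sub_distrib, ← Finset.sum_mul]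
  ring

theorem children_sum_le (hm : 1 ≤ m) (hX : Sized m g s X) {z : ℕ} (hz : 1 ≤ z) :
    Ssum s (X.filter fun J => mty m g s J = z) + ∑ i ∈ fchFin m g r z, SH m g r s X i ≤
      SH m g r s X z := by
  have hp : ∀ i ∈ fchFin m g r z, 0 < p m g r i := fun i hi => by
    rw [p_eq_of_mem_fchFin hi]; exact hz
  have hdisj : Set.PairwiseDisjoint (fchFin m g r z : Set ℕ) fun i => H m g r s i X := by
    intro a ha b hb hab
    refine Finset.disjoint_left.mpr fun J hJa hJb => hab ?_
    refine eq_of_p_eq (Finset.mem_filter.mp hJa).2.2.2 (Finset.mem_filter.mp hJb).2.2.2 ?_ (hp a ha)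
    rw [p_eq_of_mem_fchFin ha, p_eq_of_mem_fchFin hb]
  have hdisj' : Disjoint (X.filter fun J => mty m g s J = z)
      ((fchFin m g r z).biUnion fun i => H m g r s i X) := by
    refine Finset.disjoint_left.mpr fun J hJ hJ' => ?_
    obtain ⟨i, hi, hJi⟩ := Finset.mem_biUnion.mp hJ'
    have h1 := le_of_mem_P (Finset.mem_filter.mp hJi).2.2.2
    have h2 := lt_p (hp i hi)
    rw [p_eq_of_mem_fchFin hi] at h2
    rw [(Finset.mem_filter.mp hJ).2] at h1
    omega
  simp only [SH, Ssum]
  rw [← Finset.sum_biUnion hdisj, ← Finset.sum_union hdisj']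
  refine Finset.sum_le_sum_of_subset_of_nonneg (fun J hJ => ?_)
    fun J hJ _ => (hX J (Finset.mem_filter.mp hJ).1).1.le
  rcases Finset.mem_union.mp hJ with hJ | hJ
  · obtain ⟨hJ, hJz⟩ := Finset.mem_filter.mp hJ
    have := mty_spec hm hX hJ
    refine Finset.mem_filter.mpr ⟨hJ, this.1, this.2.1, ?_⟩
    rw [hJz]
    exact Relation.ReflTransGen.refl
  · obtain ⟨i, hi, hJi⟩ := Finset.mem_biUnion.mp hJ
    obtain ⟨hJ, h1, h2, h3⟩ := Finset.mem_filter.mp hJi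
    refine Finset.mem_filter.mpr ⟨hJ, h1, h2, mem_P_trans h3 ?_⟩
    have := p_mem_P (hp i hi)
    rwa [p_eq_of_mem_fchFin hi] at this

theorem childExcess_nonneg (hX : Sized m g s X) {z : ℕ} (hz : 1 ≤ z) :
    0 ≤ childExcess m g r s X z := by
  rw [childExcess_eq]
  exact Finset.sum_nonneg fun i hi => mul_nonneg (SH_nonneg hX i)
    (sub_nonneg.mpr (rate_le_of_p_eq hz (p_eq_of_mem_fchFin hi)))

theorem Embeds.childExcess_le (hE : Embeds s s' X Y e) (hY : Sized m g s' Y) {z : ℕ}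
    (hz : 1 ≤ z) : childExcess m g r s X z ≤ childExcess m g r s' Y z := by
  rw [childExcess_eq, childExcess_eq]
  exact Finset.sum_le_sum fun i hi => mul_le_mul_of_nonneg_right (hE.SH_le hY i)
    (sub_nonneg.mpr (rate_le_of_p_eq hz (p_eq_of_mem_fchFin hi)))

theorem Machines.rate_pos (hM : Machines m g r) {z : ℕ} (h1 : 1 ≤ z) (h2 : z ≤ m) :
    0 < r z / g z :=
  div_pos (hM.r_pos z h1 h2) (hM.g_pos z h1 h2)

theorem Embeds.childCost_sub_childExcess_le (hM : Machines m g r) (hE : Embeds s s' X Y e)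
    (hY : Sized m g s' Y) {z : ℕ} (hz : 1 ≤ z) (hzm : z ≤ m) :
    childCost m g r s X z - childExcess m g r s X z ≤
      childCost m g r s' Y z - childExcess m g r s' Y z := by
  rw [childCost_sub_childExcess, childCost_sub_childExcess]
  exact mul_le_mul_of_nonneg_right (add_le_add (hE.Ssum_filter_le hY (fun k => k = z))
    (Finset.sum_le_sum fun i _ => hE.SH_le hY i)) (hM.rate_pos hz hzm).le

theorem childCost_sub_childExcess_lt (hM : Machines m g r) (hX : Sized m g s X) {z : ℕ}
    (hz : 1 ≤ z) (hzm : z ≤ m) (hS : SH m g r s X z < g z) :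
    childCost m g r s X z - childExcess m g r s X z < r z := by
  rw [childCost_sub_childExcess]
  calc _ ≤ SH m g r s X z * (r z / g z) :=
        mul_le_mul_of_nonneg_right (children_sum_le hM.one_le hX hz) (hM.rate_pos hz hzm).le
    _ < g z * (r z / g z) := mul_lt_mul_of_pos_right hS (hM.rate_pos hz hzm)
    _ = r z := mul_div_cancel₀ _ (ne_of_gt (hM.g_pos z hz hzm))

/-- In the tree of the highest machine type, every job is charged at least at its rate. -/
theorem le_charge_of_mem (hM : Machines m g r) (hX : Sized m g s X) {J : ι} (hJ : J ∈ X)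
    (hA : mty m g s J ∈ A m g r (zdia m g r s X)) :
    s J * (r (zdia m g r s X) / g (zdia m g r s X)) ≤ charge m g r s X J := by
  have hsJ := (hX J hJ).1
  have hz1 := (mty_spec hM.one_le hX hJ).1.trans (mty_le_zdia (r := r) hM.one_le hX hJ)
  have hzm := zdia_le_m (r := r) hM.one_le hX ⟨J, hJ⟩
  rw [charge_eq, if_pos hA]
  set z := zdia m g r s X
  have hρ := hM.rate_pos hz1 hzm
  split_ifs with h1 h2 h3 h4
  · exact le_rfl
  · exact le_rfl
  · have hchil := rate_le_of_p_eq hz1 (chil_spec hA h3).1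
    have hlt := childCost_sub_childExcess_lt hM hX hz1 hzm (not_le.mp h1)
    have hα : (childCost m g r s X z - r z) / childExcess m g r s X z ≤ 1 :=
      (div_le_one (by linarith)).mpr (by linarith)
    refine mul_le_mul_of_nonneg_left ?_ hsJ.le
    nlinarith [mul_le_mul_of_nonneg_left hα (sub_nonneg.mpr hchil)]
  · refine le_mul_of_one_le_right (mul_pos hsJ hρ).le ?_
    rw [le_add_iff_nonneg_right]
    exact div_nonneg (by linarith) (mul_nonneg (Ssum_filter_nonneg hX _) hρ.le)
  · exact mul_le_mul_of_nonneg_left (rate_le_of_p_eq hz1 (chil_spec hA h4).1) hsJ.le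

theorem charge_le_of_mem_of_ne (hM : Machines m g r) (hX : Sized m g s X) {J : ι} (hJ : J ∈ X)
    (hA : mty m g s J ∈ A m g r (zdia m g r s X)) (hne : mty m g s J ≠ zdia m g r s X) :
    charge m g r s X J ≤ s J * (r (chil m g r (zdia m g r s X) (mty m g s J)) /
      g (chil m g r (zdia m g r s X) (mty m g s J))) := by
  have hsJ := (hX J hJ).1
  have hz1 := (mty_spec hM.one_le hX hJ).1.trans (mty_le_zdia (r := r) hM.one_le hX hJ)
  have hchil := rate_le_of_p_eq hz1 (chil_spec hA hne).1
  rw [charge_eq, if_pos hA]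
  simp only [if_neg hne]
  split_ifs with h1 h2
  · exact mul_le_mul_of_nonneg_left hchil hsJ.le
  · refine mul_le_mul_of_nonneg_left ?_ hsJ.le
    exact sub_le_self _ (mul_nonneg (sub_nonneg.mpr hchil)
      (div_nonneg (by linarith) (childExcess_nonneg hX hz1)))
  · exact le_rfl

/-- Enlarging the job set does not increase the charge of any job, when the highest machine type
stays the same. -/
theorem Embeds.charge_le_of_zdia_eq (hM : Machines m g r) (hE : Embeds s s' X Y e)
    (hY : Sized m g s' Y) {J : ι} (hJ : J ∈ X) (hz : zdia m g r s' Y = zdia m g r s X) :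
    charge m g r s' Y (e J) ≤ charge m g r s X J := by
  have hX := hE.sized hY
  have hsJ := (hX J hJ).1
  have hz1 := (mty_spec hM.one_le hX hJ).1.trans (mty_le_zdia (r := r) hM.one_le hX hJ)
  have hzm := zdia_le_m (r := r) hM.one_le hX ⟨J, hJ⟩
  by_cases hA : mty m g s J ∈ A m g r (zdia m g r s X)
  swap
  · rw [charge_eq, charge_eq, hz, hE.mty_eq hJ, if_neg hA, if_neg hA, hE.size J hJ]
  have hlow := le_charge_of_mem hM hX hJ hA
  have hupp := charge_le_of_mem_of_ne (r := r) hM hY (hE.mem J hJ)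
  rw [hz, hE.mty_eq hJ, hE.size J hJ] at hupp
  have hdiff := hE.childCost_sub_childExcess_le hM hY hz1 hzm
  have hexc := hE.childExcess_le (r := r) hY hz1
  have hSH := hE.SH_le (r := r) hY (zdia m g r s X)
  rw [charge_eq J, if_pos hA] at hlow ⊢
  have hupp := hupp hA
  rw [charge_eq (e J), hz, hE.mty_eq hJ, hE.size J hJ, if_pos hA] at hupp ⊢
  set z := zdia m g r s X
  have hρ := hM.rate_pos hz1 hzm
  by_cases hYg : g z ≤ SH m g r s' Y z
  · rwa [if_pos hYg]
  have hXg : ¬ g z ≤ SH m g r s X z := fun h => hYg (h.trans hSH)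
  have hltX := childCost_sub_childExcess_lt hM hX hz1 hzm (not_le.mp hXg)
  have hltY := childCost_sub_childExcess_lt hM hY hz1 hzm (not_le.mp hYg)
  rw [if_neg hYg] at hupp ⊢
  rw [if_neg hXg] at hlow ⊢
  by_cases hk : mty m g s J = z
  · simp only [if_pos hk] at hlow ⊢
    by_cases hYc : r z < childCost m g r s' Y z
    · rwa [if_pos hYc]
    rw [if_neg hYc, if_neg (by linarith)]
    refine mul_le_mul_of_nonneg_left (add_le_add_right ?_ _) (mul_pos hsJ hρ).le
    have hpos : 0 < Ssum s (X.filter fun J => mty m g s J = z) :=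
      Finset.sum_pos (fun K hK => (hX K (Finset.mem_filter.mp hK).1).1)
        ⟨J, Finset.mem_filter.mpr ⟨hJ, hk⟩⟩
    exact div_le_div₀ (by linarith) (by linarith) (mul_pos hpos hρ)
      (mul_le_mul_of_nonneg_right (hE.Ssum_filter_le hY (fun k => k = z)) hρ.le)
  · simp only [if_neg hk] at hupp ⊢
    by_cases hXc : r z < childCost m g r s X z
    swap
    · rw [if_neg hXc]
      exact hupp hk
    rw [if_pos hXc, if_pos (by linarith)]
    have hchil := rate_le_of_p_eq hz1 (chil_spec hA hk).1
    refine mul_le_mul_of_nonneg_left (sub_le_sub_left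
      (mul_le_mul_of_nonneg_left ?_ (sub_nonneg.mpr hchil)) _) hsJ.le
    have hX0 : 0 < childExcess m g r s X z := by linarith
    have hY0 : 0 < childExcess m g r s' Y z := by linarith
    rw [div_le_div_iff₀ hX0 hY0]
    nlinarith

/-- Enlarging the job set does not increase the charge of any job. -/
theorem Embeds.charge_le (hM : Machines m g r) (hE : Embeds s s' X Y e)
    (hY : Sized m g s' Y) {J : ι} (hJ : J ∈ X) :
    charge m g r s' Y (e J) ≤ charge m g r s X J := by
  have hX := hE.sized hY
  rcases (hE.zdia_le hM hY ⟨J, hJ⟩).eq_or_lt with hzw | hzw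
  · exact hE.charge_le_of_zdia_eq hM hY hJ hzw.symm
  have hsJ := (hX J hJ).1
  obtain ⟨hk1, -, -⟩ := mty_spec hM.one_le hX hJ
  have hkz := mty_le_zdia (r := r) hM.one_le hX hJ
  have hzm := zdia_le_m (r := r) hM.one_le hX ⟨J, hJ⟩
  have hwm := zdia_le_m (r := r) hM.one_le hY ⟨e J, hE.mem J hJ⟩
  obtain ⟨a, ha, haz, hlow⟩ : ∃ a ∈ P m g r (mty m g s J), a ≤ zdia m g r s X ∧
      s J * (r a / g a) ≤ charge m g r s X J := by
    by_cases hA : mty m g s J ∈ A m g r (zdia m g r s X)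
    · exact ⟨_, hA.2.2, le_rfl, le_charge_of_mem hM hX hJ hA⟩
    · obtain ⟨h1, h2⟩ := idxT_spec (g := g) (r := r) hk1 hkz hzm
      refine ⟨_, h2.2.2, ((mem_T_iff (by omega) hzm).mp h1).2.1, ?_⟩
      rw [charge_eq, if_neg hA]
  obtain ⟨b, hb, hbw, hupp⟩ : ∃ b ∈ P m g r (mty m g s J),
      (∀ j, b < j → j < zdia m g r s' Y → r b / g b ≤ r j / g j) ∧
      charge m g r s' Y (e J) ≤ s J * (r b / g b) := by
    by_cases hA : mty m g s J ∈ A m g r (zdia m g r s' Y)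
    · have hne : mty m g s J ≠ zdia m g r s' Y := by omega
      obtain ⟨h1, h2⟩ := chil_spec hA hne
      have hc := charge_le_of_mem_of_ne (r := r) hM hY (hE.mem J hJ)
      rw [hE.mty_eq hJ, hE.size J hJ] at hc
      exact ⟨_, h2.2.2, fun j hbj hjw => rate_le_of_lt_p (hjw.le.trans hwm) hbj (by rwa [h1]),
        hc hA hne⟩
    · obtain ⟨h1, h2⟩ := idxT_spec (g := g) (r := r) hk1 (hkz.trans hzw.le) hwm
      refine ⟨_, h2.2.2, fun j hbj hjw =>
        ((mem_T_iff (by omega) hwm).mp h1).2.2 j hbj hjw.le, ?_⟩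
      rw [charge_eq, hE.mty_eq hJ, if_neg hA, hE.size J hJ]
  exact hupp.trans ((mul_le_mul_of_nonneg_left (rate_le_of_common_descendant hb ha
    fun j hbj hja => hbw j hbj (by omega)) hsJ.le).trans hlow)

end Jobs

/-- For every `t0 ∈ span(𝒥)`, with
`G_{t0} := {J ∈ 𝒥 : t0 − d < I(J)⁺ ≤ t0}` and, for `J ∈ G_{t0}`,
`τ_J := ((t0 − I(J)⁺)/d)·len(J) + I(J)⁻`:
(i) `τ_J ∈ I(J) ∩ [t0 − d, t0)` for every `J ∈ G_{t0}`; and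
(ii) `∑_{J ∈ 𝒥(t0)} r̃(𝒥(t0))(J) + ∑_{J ∈ G_{t0}} r̃(𝒥(τ_J))(J) ≥
∑_{J ∈ 𝒥(t0) ∪ ℋ(t0)} r̃(𝒥(t0) ∪ ℋ(t0))(J)`. -/
theorem statement_19 {ι : Type*} (m : ℕ) (g r : ℕ → ℝ) (s Ilo Ihi : ι → ℝ)
    (𝒥 : Finset ι) (μ d : ℝ)
    (hm : 1 ≤ m)
    (hg1 : 0 < g 1) (hr1 : 0 < r 1)
    (hg : ∀ i j, 1 ≤ i → i < j → j ≤ m → g i < g j)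
    (hr : ∀ i j, 1 ≤ i → i < j → j ≤ m → r i < r j)
    (hJ : 𝒥.Nonempty)
    (hs : ∀ J ∈ 𝒥, 0 < s J ∧ s J ≤ g m)
    (hμ : 1 ≤ μ)
    (hlen : ∀ J ∈ 𝒥, 1 ≤ Ihi J - Ilo J ∧ Ihi J - Ilo J ≤ μ)
    (hd : μ ≤ d)
    (t0 : ℝ) (ht0 : t0 ∈ spanSet Ilo Ihi 𝒥) :
    (∀ J ∈ 𝒥.filter (fun J => t0 - d < Ihi J ∧ Ihi J ≤ t0),
        (Ilo J ≤ (t0 - Ihi J) / d * (Ihi J - Ilo J) + Ilo J ∧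
         (t0 - Ihi J) / d * (Ihi J - Ilo J) + Ilo J < Ihi J) ∧
        t0 - d ≤ (t0 - Ihi J) / d * (Ihi J - Ilo J) + Ilo J ∧
        (t0 - Ihi J) / d * (Ihi J - Ilo J) + Ilo J < t0) ∧
    (∑ x ∈ activeJH Ilo Ihi 𝒥 d t0,
        charge m g r (Sum.elim s s) (activeJH Ilo Ihi 𝒥 d t0) x)
      ≤ (∑ J ∈ activeJ Ilo Ihi 𝒥 t0,
            charge m g r s (activeJ Ilo Ihi 𝒥 t0) J)
        + ∑ J ∈ 𝒥.filter (fun J => t0 - d < Ihi J ∧ Ihi J ≤ t0),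
            charge m g r s
              (activeJ Ilo Ihi 𝒥 ((t0 - Ihi J) / d * (Ihi J - Ilo J) + Ilo J)) J := by
  have hM : Machines m g r := by
    refine ⟨hm, fun i h1 h2 => ?_, fun i h1 h2 => ?_⟩
    · rcases h1.eq_or_lt with rfl | h1
      · exact hg1
      · exact hg1.trans (hg 1 i le_rfl h1 h2)
    · rcases h1.eq_or_lt with rfl | h1
      · exact hr1
      · exact hr1.trans (hr 1 i le_rfl h1 h2)
  have hd0 : 0 < d := by linarith
  have htime : ∀ J ∈ 𝒥.filter (fun J => t0 - d < Ihi J ∧ Ihi J ≤ t0),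
      (Ilo J ≤ (t0 - Ihi J) / d * (Ihi J - Ilo J) + Ilo J ∧
       (t0 - Ihi J) / d * (Ihi J - Ilo J) + Ilo J < Ihi J) ∧
      t0 - d ≤ (t0 - Ihi J) / d * (Ihi J - Ilo J) + Ilo J ∧
      (t0 - Ihi J) / d * (Ihi J - Ilo J) + Ilo J < t0 := by
    intro J hJ
    obtain ⟨hJ, h1, h2⟩ := Finset.mem_filter.mp hJ
    obtain ⟨hl1, hl2⟩ := hlen J hJ
    have hq0 : 0 ≤ (t0 - Ihi J) / d := div_nonneg (by linarith) hd0.le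
    have hq1 : (t0 - Ihi J) / d < 1 := (div_lt_one hd0).mpr (by linarith)
    have hqd : (t0 - Ihi J) / d * d = t0 - Ihi J := div_mul_cancel₀ _ hd0.ne'
    generalize (t0 - Ihi J) / d = q at *
    have hlt : q * (Ihi J - Ilo J) + Ilo J < Ihi J := by nlinarith
    exact ⟨⟨by nlinarith, hlt⟩, by nlinarith, by linarith⟩
  refine ⟨htime, ?_⟩
  set Y := activeJH Ilo Ihi 𝒥 d t0 with hYdef
  have hmemY : ∀ x, x ∈ Y ↔ (∃ J ∈ activeJ Ilo Ihi 𝒥 t0, Sum.inl J = x) ∨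
      ∃ J ∈ 𝒥.filter (fun J => t0 - d < Ihi J ∧ Ihi J ≤ t0), Sum.inr J = x := by
    intro x
    rcases x with J | J
    · simp [hYdef, activeJH, activeJ]
    · simp only [hYdef, activeJH, Finset.mem_filter, Finset.mem_union, Finset.mem_image,
        Sum.elim_inr, ht0, and_true, reduceCtorEq, and_false, exists_false, false_or,
        Sum.inr.injEq, exists_eq_right, sub_lt_iff_lt_add]
      exact and_congr_right fun _ => and_comm
  have hY : Sized m g (Sum.elim s s) Y := by
    intro x hx
    rcases (hmemY x).mp hx with ⟨J, hJ, rfl⟩ | ⟨J, hJ, rfl⟩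
    · exact hs J (Finset.mem_filter.mp hJ).1
    · exact hs J (Finset.mem_filter.mp hJ).1
  let e : ι → ι ⊕ ι := fun J => if Ilo J ≤ t0 ∧ t0 < Ihi J then Sum.inl J else Sum.inr J
  have hE : ∀ t, t0 - d ≤ t → t ≤ t0 →
      Embeds s (Sum.elim s s) (activeJ Ilo Ihi 𝒥 t) Y e := by
    intro t ht1 ht2
    refine ⟨fun J _ K _ h => ?_, fun J hJ => ?_, fun J _ => ?_⟩
    · simp only [e] at h
      split_ifs at h <;> simpa using h
    · obtain ⟨hJ, h1, h2⟩ := Finset.mem_filter.mp hJ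
      rw [hmemY]
      by_cases h : Ilo J ≤ t0 ∧ t0 < Ihi J
      · exact Or.inl ⟨J, Finset.mem_filter.mpr ⟨hJ, h⟩, (if_pos h).symm⟩
      · refine Or.inr ⟨J, Finset.mem_filter.mpr ⟨hJ, by linarith, ?_⟩, (if_neg h).symm⟩
        by_contra hlt
        exact h ⟨by linarith, not_le.mp hlt⟩
    · simp only [e]
      split_ifs <;> rfl
  have hsplit : Y = (activeJ Ilo Ihi 𝒥 t0).image Sum.inl ∪
      (𝒥.filter (fun J => t0 - d < Ihi J ∧ Ihi J ≤ t0)).image Sum.inr := by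
    ext x
    rw [hmemY, Finset.mem_union, Finset.mem_image, Finset.mem_image]
  have hsum : ∀ f : ι ⊕ ι → ℝ, ∑ x ∈ Y, f x = ∑ J ∈ activeJ Ilo Ihi 𝒥 t0, f (Sum.inl J) +
      ∑ J ∈ 𝒥.filter (fun J => t0 - d < Ihi J ∧ Ihi J ≤ t0), f (Sum.inr J) := by
    intro f
    rw [hsplit, Finset.sum_union, Finset.sum_image Sum.inl_injective.injOn,
      Finset.sum_image Sum.inr_injective.injOn]
    refine Finset.disjoint_left.mpr fun x hx hx' => ?_
    obtain ⟨J, -, rfl⟩ := Finset.mem_image.mp hx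
    simp at hx'
  rw [hsum]
  refine add_le_add (Finset.sum_le_sum fun J hJ => ?_) (Finset.sum_le_sum fun J hJ => ?_)
  · have h := (hE t0 (by linarith) le_rfl).charge_le hM hY hJ
    rwa [show e J = Sum.inl J from if_pos (Finset.mem_filter.mp hJ).2] at h
  · obtain ⟨hI, h1, h2⟩ := htime J hJ
    obtain ⟨hJ𝒥, -, hJt⟩ := Finset.mem_filter.mp hJ
    have h := (hE _ h1 h2.le).charge_le hM hY (Finset.mem_filter.mpr ⟨hJ𝒥, hI⟩)
    rwa [show e J = Sum.inr J from if_neg fun h => absurd h.2 (not_lt.mpr hJt)] at h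

end BSHM
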